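/- arXiv:1607.03286 — 3 statements merged into one kernel-verified Lean document; each statement's English description precedes it below -/
import Mathlib

section
/- Let D be a dominated dcpo. Then an element A of the order sobrification D̂ is ≺-compact (i.e., A ≺ A in the scpo D̂) if and only if A = ↓x for some x ∈ D; moreover the map x ↦ ↓x is an order isomorphism from D onto the set K(D̂) of ≺-compact elements of D̂ (with the inclusion order). -/
namespace HoZhao

variable {α : Type*}

/-- A set is Scott-closed if it is a lower set and contains the supremum of each of its
nonempty directed subsets. -/
def ScottClosed [Preorder α] (S : Set α) : Prop :=
  IsLowerSet S ∧ ∀ d : Set α, d ⊆ S → d.Nonempty → DirectedOn (· ≤ ·) d →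
    ∀ a : α, IsLUB d a → a ∈ S

/-- A nonempty set is irreducible if whenever it is covered by two Scott-closed sets it is
contained in one of them. -/
def ScottIrred [Preorder α] (A : Set α) : Prop :=
  A.Nonempty ∧ ∀ B C : Set α, ScottClosed B → ScottClosed C → A ⊆ B ∪ C → A ⊆ B ∨ A ⊆ C

/-- A dcpo: every nonempty directed subset has a supremum. -/
def IsDcpo (α : Type*) [Preorder α] : Prop :=
  ∀ d : Set α, d.Nonempty → DirectedOn (· ≤ ·) d → ∃ a : α, IsLUB d a

/-- The order sobrification: the poset of Scott-closed irreducible subsets, ordered by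
inclusion. -/
abbrev OrderSob (α : Type*) [Preorder α] :=
  {A : Set α // ScottClosed A ∧ ScottIrred A}

/-- x' ≺ x : for every closed irreducible set A with x ≤ sup A, one has x' ∈ A. -/
def Prec [Preorder α] (x' x : α) : Prop :=
  ∀ A : Set α, ScottClosed A → ScottIrred A → ∀ a : α, IsLUB A a → x ≤ a → x' ∈ A

/-- A' ◁ A : A' is contained in ↓x for some x ∈ A. -/
def Tri [Preorder α] (A' A : OrderSob α) : Prop :=
  ∃ x ∈ (A : Set α), (A' : Set α) ⊆ {y : α | y ≤ x}

/-- ∇A = the collection of all A' ◁ A. -/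
def Nabla [Preorder α] (A : OrderSob α) : Set (OrderSob α) := {A' | Tri A' A}

/-- A dcpo is dominated if ∇A is Scott-closed in the order sobrification, for every A. -/
def Dominated (α : Type*) [Preorder α] : Prop :=
  ∀ A : OrderSob α, ScottClosed (Nabla A)

theorem closed_Iic [PartialOrder α] (x : α) : ScottClosed {y : α | y ≤ x} :=
  ⟨fun _ _ hba ha => le_trans hba ha, fun _ hd _ _ _ ha => ha.2 fun _ hy => hd hy⟩

/-- The principal ideal as an element of the order sobrification. -/
def eta [PartialOrder α] (x : α) : OrderSob α :=
  ⟨{y : α | y ≤ x}, closed_Iic x, ⟨x, le_refl x⟩, fun B C hB hC h => by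
    rcases h (le_refl x) with h | h
    · exact Or.inl fun y hy => hB.1 hy h
    · exact Or.inr fun y hy => hC.1 hy h⟩

theorem eta_le [PartialOrder α] (x : α) (A : OrderSob α) : eta x ≤ A ↔ x ∈ A.1 :=
  ⟨fun h => h (le_refl x), fun h _ hy => A.2.1.1 hy h⟩

theorem eta_le_eta [PartialOrder α] (x y : α) : eta x ≤ eta y ↔ x ≤ y := eta_le x (eta y)

theorem closed_preimage [PartialOrder α] {B : Set (OrderSob α)} (hB : ScottClosed B) :
    ScottClosed {x : α | eta x ∈ B} := by
  refine ⟨fun a b hba ha => hB.1 ((eta_le_eta b a).2 hba) ha, ?_⟩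
  intro d hd hne hdir a ha
  refine hB.2 (eta '' d) ?_ (hne.image _) ?_ (eta a) ⟨?_, ?_⟩
  · rintro _ ⟨x, hx, rfl⟩
    exact hd hx
  · rintro _ ⟨x, hx, rfl⟩ _ ⟨y, hy, rfl⟩
    obtain ⟨z, hz, hxz, hyz⟩ := hdir x hx y hy
    exact ⟨eta z, ⟨z, hz, rfl⟩, (eta_le_eta _ _).2 hxz, (eta_le_eta _ _).2 hyz⟩
  · rintro _ ⟨x, hx, rfl⟩
    exact (eta_le_eta _ _).2 (ha.1 hx)
  · intro U hU
    rw [eta_le]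
    exact U.2.1.2 d (fun x hx => (eta_le _ _).1 (hU ⟨x, hx, rfl⟩)) hne hdir a ha

/-- The Scott closure. -/
def scl [PartialOrder α] (X : Set α) : Set α := {x | ∀ B : Set α, ScottClosed B → X ⊆ B → x ∈ B}

theorem scl_closed [PartialOrder α] (X : Set α) : ScottClosed (scl X) :=
  ⟨fun _ _ hba ha B hB hX => hB.1 hba (ha B hB hX),
   fun d hd hne hdir a ha B hB hX => hB.2 d (fun _ hx => hd hx B hB hX) hne hdir a ha⟩

theorem scl_irred [PartialOrder α] {X : Set α} (h : ScottIrred X) : ScottIrred (scl X) := by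
  have hs : X ⊆ scl X := fun x hx B _ hX => hX hx
  refine ⟨h.1.mono hs, fun B C hB hC hBC => ?_⟩
  rcases h.2 B C hB hC (hs.trans hBC) with h | h
  · exact Or.inl fun x hx => hx B hB h
  · exact Or.inr fun x hx => hx C hC h

theorem box_closed [PartialOrder α] {B : Set α} (hB : ScottClosed B) :
    ScottClosed {A : OrderSob α | A.1 ⊆ B} := by
  refine ⟨fun a b hba ha => Set.Subset.trans hba ha, ?_⟩
  intro d hd hne hdir a ha
  let X : Set α := {x | ∃ A ∈ d, x ∈ A.1}
  have hX : ScottIrred X := by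
    obtain ⟨A, hA⟩ := hne
    obtain ⟨x, hx⟩ := A.2.2.1
    refine ⟨⟨x, A, hA, hx⟩, fun P Q hP hQ hPQ => ?_⟩
    by_contra hcon
    obtain ⟨h1, h2⟩ := not_or.1 hcon
    obtain ⟨p, ⟨A1, hA1, hp⟩, hpP⟩ := Set.not_subset.1 h1
    obtain ⟨q, ⟨A2, hA2, hq⟩, hqQ⟩ := Set.not_subset.1 h2
    obtain ⟨A3, hA3, h13, h23⟩ := hdir A1 hA1 A2 hA2
    rcases A3.2.2.2 P Q hP hQ (fun y hy => hPQ ⟨A3, hA3, hy⟩) with h | h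
    · exact hpP (h (h13 hp))
    · exact hqQ (h (h23 hq))
  have hle : a ≤ (⟨scl X, scl_closed X, scl_irred hX⟩ : OrderSob α) :=
    ha.2 fun A hA x hx P _ hXP => hXP ⟨A, hA, hx⟩
  intro x hx
  exact hle hx B hB (by rintro y ⟨A, hA, hy⟩; exact hd hA hy)

theorem prec_eta [PartialOrder α] (x : α) : Prec (eta x) (eta x) := by
  intro F hF hFi S hS hx
  have key : ∀ y : α, eta y ∈ F ↔ ∃ A ∈ F, y ∈ A.1 := fun y =>
    ⟨fun h => ⟨eta y, h, le_refl y⟩, fun ⟨A, hA, hy⟩ => hF.1 ((eta_le y A).2 hy) hA⟩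
  have hirr : ScottIrred {y : α | eta y ∈ F} := by
    obtain ⟨A, hA⟩ := hFi.1
    obtain ⟨y, hy⟩ := A.2.2.1
    refine ⟨⟨y, (key y).2 ⟨A, hA, hy⟩⟩, fun P Q hP hQ hPQ => ?_⟩
    rcases hFi.2 _ _ (box_closed hP) (box_closed hQ) (fun A hA =>
      A.2.2.2 P Q hP hQ fun y hy => hPQ ((key y).2 ⟨A, hA, hy⟩)) with h | h
    · exact Or.inl fun y hy => h hy (le_refl y)
    · exact Or.inr fun y hy => h hy (le_refl y)
  have hle : S ≤ (⟨{y : α | eta y ∈ F}, closed_preimage hF, hirr⟩ : OrderSob α) :=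
    hS.2 fun A hA y hy => (key y).2 ⟨A, hA, hy⟩
  exact hle ((eta_le _ _).1 hx)

theorem eq_eta_of_prec [PartialOrder α] (hdom : Dominated α) (A : OrderSob α) (h : Prec A A) :
    ∃ x : α, eta x = A := by
  have hmem : ∀ x ∈ A.1, eta x ∈ Nabla A := fun x hx => ⟨x, hx, fun _ hy => hy⟩
  have hirr : ScottIrred (Nabla A) := by
    obtain ⟨x, hx⟩ := A.2.2.1
    refine ⟨⟨eta x, hmem x hx⟩, fun P Q hP hQ hPQ => ?_⟩
    rcases A.2.2.2 _ _ (closed_preimage hP) (closed_preimage hQ)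
      (fun y hy => hPQ (hmem y hy)) with h | h
    · exact Or.inl fun A' ⟨y, hy, hA'⟩ => hP.1 (show A' ≤ eta y from hA') (h hy)
    · exact Or.inr fun A' ⟨y, hy, hA'⟩ => hQ.1 (show A' ≤ eta y from hA') (h hy)
  have hlub : IsLUB (Nabla A) A :=
    ⟨fun A' ⟨y, hy, hA'⟩ => le_trans (show A' ≤ eta y from hA') ((eta_le _ _).2 hy),
     fun U hU x hx => (eta_le _ _).1 (hU (hmem x hx))⟩
  obtain ⟨x, hx, hAx⟩ := h _ (hdom A) hirr A hlub le_rfl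
  exact ⟨x, le_antisymm ((eta_le _ _).2 hx) hAx⟩

/-- For dominated D, the ≺-compact elements of D̂ are exactly the principal
downsets ↓x, and x ↦ ↓x is an order isomorphism from D onto K(D̂). -/
theorem prec_compact_iff_principal [PartialOrder α] (hD : IsDcpo α) (hdom : Dominated α) :
    (∀ A : OrderSob α, Prec A A ↔ ∃ x : α, (A : Set α) = {y : α | y ≤ x}) ∧
    ∃ e : α ≃o {A : OrderSob α // Prec A A},
      ∀ x : α, ((e x : OrderSob α) : Set α) = {y : α | y ≤ x} := by
  refine ⟨fun A => ⟨fun h => ?_, ?_⟩, ?_⟩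
  · obtain ⟨x, rfl⟩ := eq_eta_of_prec hdom A h
    exact ⟨x, rfl⟩
  · rintro ⟨x, hx⟩
    have : A = eta x := Subtype.ext hx
    rw [this]
    exact prec_eta x
  · let f : α ↪o {A : OrderSob α // Prec A A} :=
      OrderEmbedding.ofMapLEIff (fun x => ⟨eta x, prec_eta x⟩) fun x y => eta_le_eta x y
    refine ⟨RelIso.ofSurjective f ?_, fun x => rfl⟩
    rintro ⟨A, hA⟩
    obtain ⟨x, hx⟩ := eq_eta_of_prec hdom A hA
    exact ⟨x, Subtype.ext hx⟩

end HoZhao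
end

section
/- Let D and E be dominated dcpos. If the lattices Γ(D) and Γ(E) of Scott-closed subsets (ordered by inclusion) are order-isomorphic, then D and E are order-isomorphic. Equivalently, for dominated dcpos D and E the following are equivalent: (1) D ≅ E; (2) Γ(D) ≅ Γ(E); (3) D̂ ≅ Ê. -/
namespace HoZhao

variable {α : Type*}

theorem scottClosed_sInter [Preorder α] (F : Set (Set α)) (h : ∀ S ∈ F, ScottClosed S) :
    ScottClosed (⋂₀ F) := by
  refine ⟨fun a b hab ha S hS => (h S hS).1 hab (ha S hS), ?_⟩
  intro d hd hn hdir a ha S hS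
  exact (h S hS).2 d (fun x hx => hd hx S hS) hn hdir a ha

theorem scottClosed_union [Preorder α] {B C : Set α} (hB : ScottClosed B) (hC : ScottClosed C) :
    ScottClosed (B ∪ C) := by
  refine ⟨hB.1.union hC.1, ?_⟩
  intro d hd hn hdir a ha
  by_cases h1 : d ⊆ B
  · exact Or.inl (hB.2 d h1 hn hdir a ha)
  by_cases h2 : d ⊆ C
  · exact Or.inr (hC.2 d h2 hn hdir a ha)
  obtain ⟨x, hx, hxB⟩ := Set.not_subset.1 h1
  obtain ⟨y, hy, hyC⟩ := Set.not_subset.1 h2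
  obtain ⟨z, hz, hxz, hyz⟩ := hdir x hx y hy
  rcases hd hz with h | h
  · exact absurd (hB.1 hxz h) hxB
  · exact absurd (hC.1 hyz h) hyC

theorem scottClosed_empty [Preorder α] : ScottClosed (∅ : Set α) := by
  refine ⟨fun a b _ h => h, ?_⟩
  intro d hd hn
  obtain ⟨x, hx⟩ := hn
  exact absurd (hd hx) (Set.notMem_empty x)

theorem scottClosed_Iic [Preorder α] (x : α) : ScottClosed (Set.Iic x) :=
  ⟨isLowerSet_Iic x, fun _ hd _ _ _ ha => ha.2 (fun _ hy => hd hy)⟩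

theorem scottIrred_Iic [Preorder α] (x : α) : ScottIrred (Set.Iic x) := by
  refine ⟨⟨x, le_rfl⟩, ?_⟩
  intro B C hB hC h
  rcases h (le_refl x : x ∈ Set.Iic x) with h | h
  · exact Or.inl fun y hy => hB.1 hy h
  · exact Or.inr fun y hy => hC.1 hy h

/-- The principal ideal as a point of the sobrification. -/
def prin [Preorder α] (x : α) : OrderSob α := ⟨Set.Iic x, scottClosed_Iic x, scottIrred_Iic x⟩

theorem prin_le_iff [Preorder α] {x : α} {A : OrderSob α} : prin x ≤ A ↔ x ∈ A.1 :=
  ⟨fun h => h (le_refl x : x ∈ Set.Iic x), fun h _ hy => A.2.1.1 hy h⟩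

theorem prin_mono [Preorder α] {x y : α} (h : x ≤ y) : prin x ≤ prin y :=
  prin_le_iff.2 h

theorem isLUB_prin [Preorder α] {d : Set α} {a : α} (h : IsLUB d a) (hn : d.Nonempty)
    (hd : DirectedOn (· ≤ ·) d) : IsLUB (prin '' d) (prin a) := by
  constructor
  · rintro _ ⟨x, hx, rfl⟩
    exact prin_mono (h.1 hx)
  · intro U hU
    exact prin_le_iff.2 (U.2.1.2 d (fun x hx => prin_le_iff.1 (hU ⟨x, hx, rfl⟩)) hn hd a h)

theorem scottClosed_prin_preimage [Preorder α] {F : Set (OrderSob α)} (hF : ScottClosed F) :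
    ScottClosed {x : α | prin x ∈ F} := by
  refine ⟨fun a b hab ha => hF.1 (prin_mono hab) ha, ?_⟩
  intro d hd hn hdir a ha
  refine hF.2 (prin '' d) ?_ (hn.image _) ?_ _ (isLUB_prin ha hn hdir)
  · rintro _ ⟨x, hx, rfl⟩
    exact hd hx
  · rintro _ ⟨x, hx, rfl⟩ _ ⟨y, hy, rfl⟩
    obtain ⟨z, hz, h1, h2⟩ := hdir x hx y hy
    exact ⟨_, ⟨z, hz, rfl⟩, prin_mono h1, prin_mono h2⟩

/-- The collection of closed irreducible sets inside a closed set is closed. -/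
theorem scottClosed_below [Preorder α] {B : Set α} (hB : ScottClosed B) :
    ScottClosed {A : OrderSob α | A.1 ⊆ B} := by
  refine ⟨fun a b hab ha => Set.Subset.trans hab ha, ?_⟩
  intro d hd hn hdir a ha
  let K : Set α := ⋂₀ {S | ScottClosed S ∧ ∀ A ∈ d, A.1 ⊆ S}
  have hK : ScottClosed K := scottClosed_sInter _ fun S hS => hS.1
  have hdK : ∀ A ∈ d, A.1 ⊆ K := fun A hA x hx S hS => hS.2 A hA hx
  have hKmin : ∀ S, ScottClosed S → (∀ A ∈ d, A.1 ⊆ S) → K ⊆ S :=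
    fun S h1 h2 x hx => hx S ⟨h1, h2⟩
  have hKi : ScottIrred K := by
    obtain ⟨A, hA⟩ := hn
    refine ⟨A.2.2.1.mono (hdK A hA), ?_⟩
    intro P Q hP hQ hPQ
    by_cases h1 : ∀ A ∈ d, A.1 ⊆ P
    · exact Or.inl (hKmin P hP h1)
    by_cases h2 : ∀ A ∈ d, A.1 ⊆ Q
    · exact Or.inr (hKmin Q hQ h2)
    exfalso
    push Not at h1 h2
    obtain ⟨X, hX, hXP⟩ := h1
    obtain ⟨Y, hY, hYQ⟩ := h2
    obtain ⟨Z, hZ, hXZ, hYZ⟩ := hdir X hX Y hY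
    rcases Z.2.2.2 P Q hP hQ ((hdK Z hZ).trans hPQ) with h | h
    · exact hXP (Set.Subset.trans hXZ h)
    · exact hYQ (Set.Subset.trans hYZ h)
  have h : a ≤ (⟨K, hK, hKi⟩ : OrderSob α) := ha.2 fun A hA => hdK A hA
  exact Set.Subset.trans h (hKmin B hB hd)

theorem mem_of_isLUB [Preorder α] {F : Set (OrderSob α)} (hF : ScottClosed F)
    (hi : ScottIrred F) {a : OrderSob α} (ha : IsLUB F a) {x : α} (hx : x ∈ a.1) :
    prin x ∈ F := by
  have hU : ScottClosed {x : α | prin x ∈ F} := scottClosed_prin_preimage hF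
  have hsub : ∀ A ∈ F, A.1 ⊆ {x : α | prin x ∈ F} :=
    fun A hA y hy => hF.1 (prin_le_iff.2 hy) hA
  have hUi : ScottIrred {x : α | prin x ∈ F} := by
    obtain ⟨A, hA⟩ := hi.1
    refine ⟨A.2.2.1.mono (hsub A hA), ?_⟩
    intro B C hB hC hBC
    rcases hi.2 _ _ (scottClosed_below hB) (scottClosed_below hC)
      (fun A hA => A.2.2.2 B C hB hC ((hsub A hA).trans hBC)) with h | h
    · exact Or.inl fun y hy => h hy (le_refl y : y ∈ Set.Iic y)
    · exact Or.inr fun y hy => h hy (le_refl y : y ∈ Set.Iic y)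
  have h : a ≤ (⟨_, hU, hUi⟩ : OrderSob α) := ha.2 fun A hA => hsub A hA
  exact h hx

theorem prec_of_tri [Preorder α] {A' A : OrderSob α} (h : Tri A' A) : Prec A' A := by
  obtain ⟨x, hx, hA⟩ := h
  intro F hF hi a ha hle
  exact hF.1 (show A' ≤ prin x from hA) (mem_of_isLUB hF hi ha (hle hx))

theorem tri_of_prec [Preorder α] (hd : Dominated α) {A' A : OrderSob α} (h : Prec A' A) :
    Tri A' A := by
  have hmem : ∀ x ∈ A.1, prin x ∈ Nabla A := fun x hx => ⟨x, hx, fun y hy => hy⟩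
  refine h (Nabla A) (hd A) ⟨?_, ?_⟩ A ⟨?_, ?_⟩ le_rfl
  · obtain ⟨x, hx⟩ := A.2.2.1
    exact ⟨_, hmem x hx⟩
  · intro B C hB hC hBC
    rcases A.2.2.2 _ _ (scottClosed_prin_preimage hB) (scottClosed_prin_preimage hC)
      (fun x hx => hBC (hmem x hx)) with h | h
    · left
      rintro X ⟨x, hx, hX⟩
      exact hB.1 (show X ≤ prin x from hX) (h hx)
    · right
      rintro X ⟨x, hx, hX⟩
      exact hC.1 (show X ≤ prin x from hX) (h hx)
  · rintro X ⟨x, hx, hX⟩ y hy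
    exact A.2.1.1 (hX hy) hx
  · intro U hU x hx
    exact prin_le_iff.1 (hU (hmem x hx))

theorem prec_self_iff [PartialOrder α] (hd : Dominated α) (A : OrderSob α) :
    Prec A A ↔ ∃ x, prin x = A := by
  constructor
  · intro h
    obtain ⟨x, hx, hA⟩ := tri_of_prec hd h
    exact ⟨x, le_antisymm (prin_le_iff.2 hx) hA⟩
  · rintro ⟨x, rfl⟩
    exact prec_of_tri ⟨x, le_refl x, fun y hy => hy⟩

theorem scottClosed_preimage {β : Type*} [Preorder α] [Preorder β] (e : α ≃o β) {S : Set β}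
    (hS : ScottClosed S) : ScottClosed (e ⁻¹' S) := by
  refine ⟨fun a b hab ha => hS.1 (e.monotone hab) ha, ?_⟩
  intro d hd hn hdir a ha
  refine hS.2 (e '' d) ?_ (hn.image _) ?_ _ (e.isLUB_image'.2 ha)
  · rintro _ ⟨x, hx, rfl⟩
    exact hd hx
  · rintro _ ⟨x, hx, rfl⟩ _ ⟨y, hy, rfl⟩
    obtain ⟨z, hz, h1, h2⟩ := hdir x hx y hy
    exact ⟨_, ⟨z, hz, rfl⟩, e.monotone h1, e.monotone h2⟩

theorem scottIrred_preimage {β : Type*} [Preorder α] [Preorder β] (e : α ≃o β) {S : Set β}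
    (hS : ScottIrred S) : ScottIrred (e ⁻¹' S) := by
  refine ⟨hS.1.preimage e.surjective, ?_⟩
  intro B C hB hC h
  rcases hS.2 _ _ (scottClosed_preimage e.symm hB) (scottClosed_preimage e.symm hC)
    (fun y hy => h (show e (e.symm y) ∈ S by simpa using hy)) with h | h
  · exact Or.inl fun x hx => by simpa using h hx
  · exact Or.inr fun x hx => by simpa using h hx

theorem prec_map {β : Type*} [Preorder α] [Preorder β] (e : α ≃o β) {x' x : α}
    (h : Prec x' x) : Prec (e x') (e x) := by
  intro A hA hi a ha hle
  exact h (e ⁻¹' A) (scottClosed_preimage e hA) (scottIrred_preimage e hi) (e.symm a)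
    (e.isLUB_preimage.2 (by simpa using ha)) (e.le_symm_apply.2 hle)

theorem prec_map_iff {β : Type*} [Preorder α] [Preorder β] (e : α ≃o β) (x' x : α) :
    Prec x' x ↔ Prec (e x') (e x) :=
  ⟨prec_map e, fun h => by simpa using prec_map e.symm h⟩

/-- Order isomorphisms restrict to corresponding subtypes. -/
def subIso {β : Type*} [Preorder α] [Preorder β] (e : α ≃o β) {p : α → Prop} {q : β → Prop}
    (h : ∀ x, p x ↔ q (e x)) : {x // p x} ≃o {y // q y} where
  toEquiv := e.toEquiv.subtypeEquiv h
  map_rel_iff' := e.le_iff_le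

theorem nonempty_prinIso [PartialOrder α] (hd : Dominated α) :
    Nonempty (α ≃o {A : OrderSob α // Prec A A}) := by
  refine ⟨RelIso.ofSurjective (OrderEmbedding.ofMapLEIff
    (fun x => (⟨prin x, (prec_self_iff hd _).2 ⟨x, rfl⟩⟩ : {A : OrderSob α // Prec A A}))
    (fun x y => prin_le_iff)) ?_⟩
  rintro ⟨A, hA⟩
  obtain ⟨x, rfl⟩ := (prec_self_iff hd A).1 hA
  exact ⟨x, rfl⟩

/-- Order-theoretic description of irreducible elements. -/
def LatPrime {P : Type*} [Preorder P] (A : P) : Prop :=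
  ¬ IsMin A ∧ ∀ B C : P, (∀ U, B ≤ U → C ≤ U → A ≤ U) → A ≤ B ∨ A ≤ C

theorem latPrime_map {P Q : Type*} [Preorder P] [Preorder Q] (e : P ≃o Q) {A : P}
    (h : LatPrime A) : LatPrime (e A) := by
  refine ⟨fun hm => h.1 ?_, ?_⟩
  · intro b hb
    exact e.le_iff_le.1 (hm (e.monotone hb))
  · intro B C hBC
    rcases h.2 (e.symm B) (e.symm C) (fun U h1 h2 => e.le_iff_le.1
      (hBC (e U) (e.symm_apply_le.1 h1) (e.symm_apply_le.1 h2))) with h | h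
    · exact Or.inl (e.le_symm_apply.1 h)
    · exact Or.inr (e.le_symm_apply.1 h)

theorem latPrime_map_iff {P Q : Type*} [Preorder P] [Preorder Q] (e : P ≃o Q) (A : P) :
    LatPrime A ↔ LatPrime (e A) :=
  ⟨latPrime_map e, fun h => by simpa using latPrime_map e.symm h⟩

theorem scottIrred_iff_latPrime [Preorder α] (A : {S : Set α // ScottClosed S}) :
    ScottIrred A.1 ↔ LatPrime A := by
  constructor
  · rintro ⟨⟨x, hx⟩, h⟩
    refine ⟨fun hm => ?_, ?_⟩
    · have h1 : A ≤ (⟨∅, scottClosed_empty⟩ : {S : Set α // ScottClosed S}) :=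
        hm (show (∅ : Set α) ⊆ A.1 from Set.empty_subset _)
      exact h1 hx
    · intro B C hBC
      exact h B.1 C.1 B.2 C.2 (hBC ⟨B.1 ∪ C.1, scottClosed_union B.2 C.2⟩
        Set.subset_union_left Set.subset_union_right)
  · rintro ⟨h1, h2⟩
    refine ⟨?_, ?_⟩
    · by_contra hne
      rw [Set.not_nonempty_iff_eq_empty] at hne
      apply h1
      intro B _ x hx
      rw [hne] at hx
      exact absurd hx (Set.notMem_empty x)
    · intro B C hB hC h
      exact h2 ⟨B, hB⟩ ⟨C, hC⟩ fun U hU1 hU2 => h.trans (Set.union_subset hU1 hU2)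

/-- The sobrification as a sub-poset of the lattice of closed sets. -/
def sobIso (α : Type*) [Preorder α] :
    OrderSob α ≃o {A : {S : Set α // ScottClosed S} // LatPrime A} where
  toFun A := ⟨⟨A.1, A.2.1⟩, (scottIrred_iff_latPrime _).1 A.2.2⟩
  invFun A := ⟨A.1.1, A.1.2, (scottIrred_iff_latPrime _).2 A.2⟩
  left_inv _ := rfl
  right_inv _ := rfl
  map_rel_iff' := Iff.rfl

/-- An order isomorphism induces one between the lattices of closed sets. -/
def gammaIso {β : Type*} [Preorder α] [Preorder β] (e : α ≃o β) :
    {S : Set α // ScottClosed S} ≃o {S : Set β // ScottClosed S} where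
  toFun S := ⟨e.symm ⁻¹' S.1, scottClosed_preimage e.symm S.2⟩
  invFun S := ⟨e ⁻¹' S.1, scottClosed_preimage e S.2⟩
  left_inv S := by ext x; simp
  right_inv S := by ext x; simp
  map_rel_iff' := by
    intro S T
    exact ⟨fun h x hx => by simpa using @h (e x) (by simpa using hx), fun h x hx => h hx⟩

/-- For dominated dcpos D and E, Γ(D) ≅ Γ(E) implies D ≅ E; indeed
D ≅ E, Γ(D) ≅ Γ(E) and D̂ ≅ Ê are all equivalent. -/
theorem dominated_gamma_faithful {β : Type*} [PartialOrder α] [PartialOrder β]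
    (hα : IsDcpo α) (hβ : IsDcpo β) (hda : Dominated α) (hdb : Dominated β) :
    (Nonempty ({S : Set α // ScottClosed S} ≃o {S : Set β // ScottClosed S}) →
      Nonempty (α ≃o β)) ∧
    List.TFAE [Nonempty (α ≃o β),
      Nonempty ({S : Set α // ScottClosed S} ≃o {S : Set β // ScottClosed S}),
      Nonempty (OrderSob α ≃o OrderSob β)] := by
  have h12 : Nonempty (α ≃o β) →
      Nonempty ({S : Set α // ScottClosed S} ≃o {S : Set β // ScottClosed S}) :=
    fun ⟨e⟩ => ⟨gammaIso e⟩
  have h23 : Nonempty ({S : Set α // ScottClosed S} ≃o {S : Set β // ScottClosed S}) →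
      Nonempty (OrderSob α ≃o OrderSob β) :=
    fun ⟨e⟩ => ⟨((sobIso α).trans (subIso e (latPrime_map_iff e))).trans (sobIso β).symm⟩
  have h31 : Nonempty (OrderSob α ≃o OrderSob β) → Nonempty (α ≃o β) := by
    rintro ⟨e⟩
    obtain ⟨f⟩ := nonempty_prinIso hda
    obtain ⟨g⟩ := nonempty_prinIso hdb
    exact ⟨(f.trans (subIso e (fun A => prec_map_iff e A A))).trans g.symm⟩
  refine ⟨fun h => h31 (h23 h), ?_⟩
  tfae_have 1 → 2 := h12
  tfae_have 2 → 3 := h23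
  tfae_have 3 → 1 := h31
  tfae_finish

end HoZhao
end

section
/- Johnstone's dcpo 𝕊 is dominated: for every closed irreducible subset A of 𝕊, the collection ∇A = {A' ∈ 𝕊̂ : A' ◁ A} is Scott-closed in the order sobrification 𝕊̂. -/
namespace HoZhao

variable {α : Type*}

/-- The underlying set of Johnstone's dcpo: ℕ × ℕ∞. -/
def JS : Type := ℕ × ℕ∞

/-- Johnstone's order: (m,n) ≤ (m',n') iff (m = m' and n ≤ n'), or
(n' = ∞, n is finite, and n ≤ m'). -/
instance : PartialOrder JS where
  le p q := (p.1 = q.1 ∧ p.2 ≤ q.2) ∨ (q.2 = ⊤ ∧ p.2 ≠ ⊤ ∧ p.2 ≤ (q.1 : ℕ∞))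
  le_refl p := Or.inl ⟨rfl, le_rfl⟩
  le_trans p q r hpq hqr := by
    rcases hpq with ⟨h1, h2⟩ | ⟨h1, h2, h3⟩ <;>
      rcases hqr with ⟨g1, g2⟩ | ⟨g1, g2, g3⟩
    · exact Or.inl ⟨h1.trans g1, h2.trans g2⟩
    · refine Or.inr ⟨g1, ?_, h2.trans g3⟩
      intro h
      rw [h] at h2
      exact g2 (top_le_iff.mp h2)
    · rw [h1] at g2
      refine Or.inr ⟨top_le_iff.mp g2, h2, ?_⟩
      rw [← g1]
      exact h3
    · exact absurd h1 g2
  le_antisymm p q hpq hqp := by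
    rcases hpq with ⟨h1, h2⟩ | ⟨h1, h2, h3⟩ <;>
      rcases hqp with ⟨g1, g2⟩ | ⟨g1, g2, g3⟩
    · exact Prod.ext h1 (le_antisymm h2 g2)
    · rw [g1] at h2
      exact absurd (top_le_iff.mp h2) g2
    · rw [h1] at g2
      exact absurd (top_le_iff.mp g2) h2
    · exact absurd g1 h2

theorem JS.le_iff (p q : JS) : p ≤ q ↔
    (p.1 = q.1 ∧ p.2 ≤ q.2) ∨ (q.2 = ⊤ ∧ p.2 ≠ ⊤ ∧ p.2 ≤ (q.1 : ℕ∞)) := Iff.rfl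

/-- Below an element of finite height the order is columnwise. -/
theorem JS.le_fin {p q : JS} (h : p ≤ q) (hq : q.2 ≠ ⊤) : p.1 = q.1 ∧ p.2 ≤ q.2 := by
  rcases h with h | h
  · exact h
  · exact absurd h.1 hq

theorem JS.exists_max {d : Set JS} (hne : d.Nonempty) (N : ℕ) (hN : ∀ p ∈ d, p.2 ≤ (N : ℕ∞)) :
    ∃ p ∈ d, ∀ q ∈ d, q.2 ≤ p.2 := by
  obtain ⟨p, hp, hmin⟩ := WellFounded.has_min
    (measure (fun p : JS => N - p.2.toNat)).wf d hne
  refine ⟨p, hp, fun q hq => ?_⟩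
  have h1 : ¬ (N - q.2.toNat < N - p.2.toNat) := hmin q hq
  have hpN := hN p hp
  have hqN := hN q hq
  have hp' : p.2 ≠ ⊤ := ne_top_of_le_ne_top (ENat.natCast_ne_top N) hpN
  have hq' : q.2 ≠ ⊤ := ne_top_of_le_ne_top (ENat.natCast_ne_top N) hqN
  obtain ⟨a, ha⟩ := ENat.ne_top_iff_exists.mp hp'
  obtain ⟨b, hb⟩ := ENat.ne_top_iff_exists.mp hq'
  rw [← ha] at hpN h1 ⊢
  rw [← hb] at hqN h1 ⊢
  simp only [ENat.toNat_natCast, Nat.cast_le] at *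
  omega

theorem JS.directed_max {d : Set JS} (hne : d.Nonempty) (hd : DirectedOn (· ≤ ·) d)
    (N : ℕ) (hN : ∀ p ∈ d, p.2 ≤ (N : ℕ∞)) : ∃ p, IsGreatest d p := by
  obtain ⟨p, hp, hmax⟩ := JS.exists_max hne N hN
  refine ⟨p, hp, fun q hq => ?_⟩
  obtain ⟨r, hr, hpr, hqr⟩ := hd p hp q hq
  have hr' : r.2 ≠ ⊤ := ne_top_of_le_ne_top (ENat.natCast_ne_top N) (hN r hr)
  have h1 := JS.le_fin hpr hr'
  have h2 := JS.le_fin hqr hr'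
  exact Or.inl ⟨h2.1.trans h1.1.symm, hmax q hq⟩

/-- Lower sets of bounded finite height are Scott-closed. -/
theorem JS.closed_of_bdd {S : Set JS} (hS : IsLowerSet S) (N : ℕ)
    (hN : ∀ p ∈ S, p.2 ≤ (N : ℕ∞)) : ScottClosed S := by
  refine ⟨hS, fun d hdS hne hd a ha => ?_⟩
  obtain ⟨p, hp⟩ := JS.directed_max hne hd N (fun p hp => hN p (hdS hp))
  rw [ha.unique hp.isLUB]
  exact hdS hp.1

theorem JS.top_mem {S : Set JS} (hS : ScottClosed S) (a : ℕ)
    (h : ∀ N : ℕ, ∃ p ∈ S, p.1 = a ∧ (N : ℕ∞) ≤ p.2) : ((a, ⊤) : ℕ × ℕ∞) ∈ S := by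
  let f : ℕ → JS := fun k => ((a, (k : ℕ∞)) : ℕ × ℕ∞)
  have hmono : ∀ i j, i ≤ j → f i ≤ f j := fun i j hij =>
    Or.inl ⟨rfl, by simpa [f] using hij⟩
  refine hS.2 (Set.range f) ?_ ⟨f 0, 0, rfl⟩ ?_ _ ⟨?_, ?_⟩
  · rintro _ ⟨k, rfl⟩
    obtain ⟨p, hp, hpa, hk⟩ := h k
    exact hS.1 (Or.inl ⟨hpa.symm, hk⟩ : f k ≤ p) hp
  · rintro _ ⟨i, rfl⟩ _ ⟨j, rfl⟩
    exact ⟨f (max i j), ⟨_, rfl⟩, hmono _ _ (le_max_left _ _), hmono _ _ (le_max_right _ _)⟩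
  · rintro _ ⟨k, rfl⟩
    exact Or.inl ⟨rfl, le_top⟩
  · intro q hq
    have hq' : ∀ k, f k ≤ q := fun k => hq ⟨k, rfl⟩
    by_cases ht : q.2 = ⊤
    · rcases hq' (q.1 + 1) with h1 | h1
      · exact Or.inl ⟨h1.1, by rw [ht]⟩
      · exfalso
        have h2 : ((q.1 + 1 : ℕ) : ℕ∞) ≤ (q.1 : ℕ∞) := h1.2.2
        rw [Nat.cast_le] at h2
        omega
    · exfalso
      obtain ⟨n, hn⟩ := ENat.ne_top_iff_exists.mp ht
      have h1 : ((n + 1 : ℕ) : ℕ∞) ≤ q.2 := (JS.le_fin (hq' (n + 1)) ht).2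
      rw [← hn, Nat.cast_le] at h1
      omega

/-- A closed irreducible set bounded above has a greatest element. -/
theorem JS.exists_greatest {S : Set JS} (hS : ScottClosed S) (hI : ScottIrred S) (x : JS)
    (hx : ∀ y ∈ S, y ≤ x) : ∃ p, IsGreatest S p := by
  by_cases hxS : x ∈ S
  · exact ⟨x, hxS, hx⟩
  have hb : ∃ N : ℕ, ∀ p ∈ S, p.2 ≤ (N : ℕ∞) := by
    by_cases ht : x.2 = ⊤
    · by_contra! hcon
      apply hxS
      have hxe : x = ((x.1, ⊤) : ℕ × ℕ∞) := Prod.ext rfl ht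
      rw [hxe]
      refine JS.top_mem hS x.1 fun N => ?_
      obtain ⟨p, hp, hlt⟩ := hcon (max N x.1)
      refine ⟨p, hp, ?_, le_trans (by exact_mod_cast le_max_left _ _) hlt.le⟩
      rcases hx p hp with h | h
      · exact h.1
      · exfalso
        have h3 := lt_of_lt_of_le hlt h.2.2
        rw [Nat.cast_lt] at h3
        exact absurd h3 (not_lt.mpr (le_max_right _ _))
    · obtain ⟨n, hn⟩ := ENat.ne_top_iff_exists.mp ht
      exact ⟨n, fun p hp => hn ▸ (JS.le_fin (hx p hp) ht).2⟩
  obtain ⟨N, hN⟩ := hb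
  have hfin : ∀ p ∈ S, p.2 ≠ ⊤ := fun p hp =>
    ne_top_of_le_ne_top (ENat.natCast_ne_top N) (hN p hp)
  obtain ⟨s, hs⟩ := hI.1
  have hcol : S ⊆ {p ∈ S | p.1 = s.1} := by
    refine (hI.2 {p ∈ S | p.1 = s.1} {p ∈ S | p.1 ≠ s.1} ?_ ?_ ?_).resolve_right
      fun h => absurd rfl (h hs).2
    · refine JS.closed_of_bdd ?_ N fun p hp => hN p hp.1
      intro p q hqp hp
      exact ⟨hS.1 hqp hp.1, (JS.le_fin hqp (hfin p hp.1)).1.trans hp.2⟩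
    · refine JS.closed_of_bdd ?_ N fun p hp => hN p hp.1
      intro p q hqp hp
      exact ⟨hS.1 hqp hp.1, fun h => hp.2 ((JS.le_fin hqp (hfin p hp.1)).1.symm.trans h)⟩
    · intro p hp
      by_cases h : p.1 = s.1
      · exact Or.inl ⟨hp, h⟩
      · exact Or.inr ⟨hp, h⟩
  obtain ⟨p, hp, hmax⟩ := JS.exists_max hI.1 N hN
  exact ⟨p, hp, fun q hq => Or.inl ⟨(hcol hq).2.trans (hcol hp).2.symm, hmax q hq⟩⟩

/-- A directed subset of a Scott-closed set has an upper bound in it. -/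
theorem JS.directed_bdd {S d : Set JS} (hS : ScottClosed S) (hdS : d ⊆ S) (hne : d.Nonempty)
    (hd : DirectedOn (· ≤ ·) d) : ∃ x ∈ S, ∀ y ∈ d, y ≤ x := by
  by_cases hb : ∃ N : ℕ, ∀ p ∈ d, p.2 ≤ (N : ℕ∞)
  · obtain ⟨N, hN⟩ := hb
    obtain ⟨p, hp⟩ := JS.directed_max hne hd N hN
    exact ⟨p, hdS hp.1, hp.2⟩
  by_cases ht : ∃ p ∈ d, p.2 = ⊤
  · obtain ⟨p, hp, hpt⟩ := ht
    refine ⟨p, hdS hp, fun q hq => ?_⟩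
    obtain ⟨r, hr, hpr, hqr⟩ := hd p hp q hq
    rcases hpr with h | h
    · have : p = r := Prod.ext h.1 (by rw [hpt] at h ⊢; exact (top_le_iff.mp h.2).symm)
      rwa [this]
    · exact absurd hpt h.2.1
  push Not at hb ht
  obtain ⟨s, hs⟩ := hne
  have hcol : ∀ p ∈ d, p.1 = s.1 := by
    intro p hp
    obtain ⟨r, hr, hpr, hsr⟩ := hd p hp s hs
    exact (JS.le_fin hpr (ht r hr)).1.trans (JS.le_fin hsr (ht r hr)).1.symm
  refine ⟨((s.1, ⊤) : ℕ × ℕ∞), JS.top_mem hS s.1 fun N => ?_, fun y hy =>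
    Or.inl ⟨hcol y hy, le_top⟩⟩
  obtain ⟨p, hp, hlt⟩ := hb N
  exact ⟨p, hdS hp, hcol p hp, hlt.le⟩

/-- Johnstone's dcpo 𝕊 is dominated: for every closed irreducible A ⊆ 𝕊,
the collection ∇A = {A' ∈ 𝕊̂ : A' ◁ A} is Scott-closed in 𝕊̂. -/
theorem johnstone_dominated : ∀ A : OrderSob JS, ScottClosed (Nabla A) := by
  intro A
  refine ⟨?_, ?_⟩
  · rintro E F hFE ⟨x, hx, hEx⟩
    exact ⟨x, hx, fun y hy => hEx (hFE hy)⟩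
  intro D hD hne hdir L hL
  have hg : ∀ E ∈ D, ∃ p, IsGreatest (E : Set JS) p := by
    intro E hE
    obtain ⟨x, _, hEx⟩ := hD hE
    exact JS.exists_greatest E.2.1 E.2.2 x hEx
  have key := JS.directed_bdd (S := (A : Set JS))
    (d := {y | ∃ E ∈ D, IsGreatest (E : Set JS) y}) A.2.1 ?_ ?_ ?_
  · obtain ⟨x, hxA, hx⟩ := key
    have hxle : ∀ y : JS, y ≤ x → y ∈ (A : Set JS) := fun y hy => A.2.1.1 hy hxA
    let P : OrderSob JS := ⟨{y | y ≤ x}, ⟨fun p q hqp hp => le_trans hqp hp,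
        fun d hd _ _ a ha => ha.2 (fun y hy => hd hy)⟩,
      ⟨x, le_refl x⟩, fun B C hB hC h => by
        rcases h (le_refl x) with h1 | h1
        · exact Or.inl fun y hy => hB.1 hy h1
        · exact Or.inr fun y hy => hC.1 hy h1⟩
    have hP : L ≤ P := by
      refine hL.2 fun E hE => ?_
      obtain ⟨p, hp⟩ := hg E hE
      intro y hy
      exact le_trans (hp.2 hy) (hx p ⟨E, hE, hp⟩)
    exact ⟨x, hxA, hP⟩
  · rintro y ⟨E, hE, hy⟩
    obtain ⟨x, hxA, hEx⟩ := hD hE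
    exact A.2.1.1 (hEx hy.1) hxA
  · obtain ⟨E, hE⟩ := hne
    obtain ⟨p, hp⟩ := hg E hE
    exact ⟨p, E, hE, hp⟩
  · rintro y ⟨E, hE, hy⟩ z ⟨F, hF, hz⟩
    obtain ⟨G, hG, hEG, hFG⟩ := hdir E hE F hF
    obtain ⟨p, hp⟩ := hg G hG
    exact ⟨p, ⟨G, hG, hp⟩, hp.2 (hEG hy.1), hp.2 (hFG hz.1)⟩

end HoZhao
end
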